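/- arXiv:2408.14936 — 2 statements merged into one kernel-verified Lean document; each statement's English description precedes it below -/
import Mathlib

section
/- There exist rational functions L_1, …, L_p : ℂ → ℂ such that for every z ∈ ℂ with Q(z) ≠ 0 and f'(z) ≠ 0, and every x ∈ ℂ with x ∉ {0, 1, f(z)} ∪ {v_1, …, v_p}, one has Σ_{y ∈ ℂ : f(y) = x} ψ_z(y)/(f'(y))² = (1/f'(z))·ψ_{f(z)}(x) + Σ_{j=1}^p L_j(z)·ψ_{v_j}(x). -/
open MeasureTheory Filter Topology Set

noncomputable section

/-!
Let `W` be the Wronskian of `Q` and `P`, so that `f' = W / Q²`, and put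
`S = P (P - Q) / (X (X - 1))`. On the fibre `P = x Q` the summand `ψ_z / f'²` is, up to the factor
`-z (z - 1) / (x (x - 1))`, the function `S Q² / (W² (z - y))` of `y`.

The polynomials `H_w = P - w Q` and `H_∞ = Q` cutting out the fibres of `f` are pairwise coprime,
and at a critical point `W` vanishes to lower order than the `H_w` vanishing there. Hence `W`
divides `S ∏ H_w`, the product being over `∞` and the critical values `w ≠ 0, 1`, and Bézout
splits `S` modulo `W` into pieces `M_w` with `W ∣ H_w M_w` and `deg M_w < deg W`. Because
`H_x = H_w - (x - w) Q`, the sum `S Q + H_x ∑ M_w / (x - w)` over the finite `w` is then a multiple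
`W G` of `W` with `deg G < deg P`. On the fibre `W = Q H_x'`, so the sum in question is
`∑ G / (H_x' (z - y))`, which Lagrange interpolation evaluates to `G(z) / H_x(z)`. The term `S Q` of
`W G` gives `ψ_{f(z)}(x) / f'(z)`, and `M_w` gives `L_w`, a rational function with denominator `W`.
-/

open Polynomial

lemma exists_eq_sum_of_dvd_mul_prod {R ι : Type*} [CommSemiring R] {s : Finset ι}
    (hs : s.Nonempty) {h : ι → R}
    (hcop : (s : Set ι).Pairwise fun i j => IsCoprime (h i) (h j)) {a m : R}
    (ha : a ∣ m * ∏ i ∈ s, h i) :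
    ∃ μ : ι → R, m = ∑ i ∈ s, μ i ∧ ∀ i ∈ s, a ∣ h i * μ i := by
  classical
  obtain ⟨u, hu⟩ := (exists_sum_eq_one_iff_pairwise_coprime hs).2
    ((Finset.pairwise_subtype_iff_pairwise_finset' _ h).2 hcop)
  refine ⟨fun i => m * (u i * ∏ j ∈ s \ {i}, h j), by rw [← Finset.mul_sum, hu, mul_one],
    fun i hi => (ha.mul_left (u i)).trans (dvd_of_eq ?_)⟩
  rw [Finset.prod_eq_mul_prod_sdiff_singleton_of_mem hi]
  ring

section Field

variable {K : Type*} [Field K]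

lemma sum_roots_eval_div_derivative [DecidableEq K] {T G : K[X]} (hT : T.Splits)
    (hsep : T.Separable) (hG : G.degree < T.degree) {z : K} (hz : T.eval z ≠ 0) :
    ∑ y ∈ T.roots.toFinset, G.eval y / ((z - y) * (derivative T).eval y) =
      G.eval z / T.eval z := by
  set s := T.roots.toFinset with hs
  set N := Lagrange.nodal s id with hN
  have hT0 : T ≠ 0 := hsep.ne_zero
  have hroots := nodup_roots hsep
  have hTN : T = C T.leadingCoeff * N := by
    conv_lhs => rw [hT.eq_prod_roots]
    rw [hN, Lagrange.nodal_eq, Finset.prod, hs, Multiset.toFinset_val, hroots.dedup]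
    rfl
  have hcard : (s.card : WithBot ℕ) = T.degree := by
    rw [Multiset.toFinset_card_of_nodup hroots, hT.degree_eq_card_roots hT0]
  have hzs : ∀ y ∈ s, z ≠ id y := by
    rintro y hy rfl
    exact hz (isRoot_of_mem_roots (Multiset.mem_toFinset.1 hy))
  have hNz : N.eval z ≠ 0 := fun h => hz (by rw [hTN, eval_mul, h, mul_zero])
  have hGz : G.eval z = N.eval z * ∑ y ∈ s, Lagrange.nodalWeight s id y * (z - y)⁻¹ * G.eval y := by
    conv_lhs => rw [Lagrange.eq_interpolate Function.injective_id.injOn (hG.trans_eq hcard.symm)]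
    exact Lagrange.eval_interpolate_not_at_node _ hzs
  rw [hGz, hTN, eval_mul, eval_C, mul_comm T.leadingCoeff, mul_div_mul_left _ _ hNz,
    Finset.sum_div]
  refine Finset.sum_congr rfl fun y hy => ?_
  rw [Lagrange.nodalWeight_eq_eval_derivative_nodal hy, derivative_C_mul, eval_mul, eval_C]
  simp only [id, div_eq_mul_inv, mul_inv]
  ring

lemma pow_succ_dvd_of_pow_dvd_wronskian [CharZero K] {A H : K[X]} {c : K} (hA : A.eval c ≠ 0)
    (hH : H.eval c = 0) {k : ℕ} (hk : (X - C c) ^ k ∣ wronskian A H) :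
    (X - C c) ^ (k + 1) ∣ H := by
  rcases eq_or_ne H 0 with rfl | hH0
  · exact dvd_zero _
  rw [← le_rootMultiplicity_iff hH0]
  by_contra! hlt
  set m := H.rootMultiplicity c
  have hm : 0 < m := (rootMultiplicity_pos hH0).2 hH
  have hHm : (X - C c) ^ m ∣ H := pow_rootMultiplicity_dvd H c
  have hAH' : (X - C c) ^ m ∣ A * derivative H := by
    rw [← sub_add_cancel (A * derivative H) (derivative A * H)]
    exact dvd_add ((pow_dvd_pow _ (Nat.lt_succ_iff.1 hlt)).trans hk) (hHm.mul_left _)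
  have hcop : IsCoprime ((X - C c) ^ m) A :=
    ((irreducible_X_sub_C c).coprime_iff_not_dvd.2 (hA ∘ dvd_iff_isRoot.1)).pow_left
  have hH' : derivative H ≠ 0 := fun h => hH0 <| by
    rw [eq_C_of_derivative_eq_zero h] at hH ⊢
    simpa using hH
  have := (le_rootMultiplicity_iff hH').2 (hcop.dvd_of_dvd_mul_left hAH')
  rw [derivative_rootMultiplicity_of_root hH] at this
  omega

lemma natDegree_wronskian_add_one [CharZero K] {P Q : K[X]} (hP : P ≠ 0) (hQ : Q ≠ 0)
    (hdeg : P.natDegree ≠ Q.natDegree) :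
    (wronskian Q P).natDegree + 1 = P.natDegree + Q.natDegree := by
  have coeff_euler (F : K[X]) (n : ℕ) : (X * derivative F).coeff n = n * F.coeff n := by
    cases n <;> simp [coeff_X_mul, coeff_derivative, mul_comm]
  have natDegree_euler (F : K[X]) : (X * derivative F).natDegree ≤ F.natDegree :=
    natDegree_le_iff_coeff_eq_zero.2 fun n hn => by
      rw [coeff_euler, coeff_eq_zero_of_natDegree_lt hn, mul_zero]
  have hXW : X * wronskian Q P = Q * (X * derivative P) - X * derivative Q * P := by
    rw [wronskian]; ring
  have hcoeff : (X * wronskian Q P).coeff (Q.natDegree + P.natDegree) =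
      (P.natDegree - Q.natDegree) * (Q.leadingCoeff * P.leadingCoeff) := by
    rw [hXW, coeff_sub, coeff_mul_add_eq_of_natDegree_le le_rfl (natDegree_euler P),
      coeff_mul_add_eq_of_natDegree_le (natDegree_euler Q) le_rfl, coeff_euler, coeff_euler]
    simp only [leadingCoeff]
    ring
  have hcoeff_ne : (X * wronskian Q P).coeff (Q.natDegree + P.natDegree) ≠ 0 := by
    rw [hcoeff]
    exact mul_ne_zero (sub_ne_zero.2 (Nat.cast_injective.ne hdeg))
      (mul_ne_zero (leadingCoeff_ne_zero.2 hQ) (leadingCoeff_ne_zero.2 hP))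
  have hW : wronskian Q P ≠ 0 := fun h => hcoeff_ne (by simp [h])
  rw [← natDegree_X_mul hW, add_comm P.natDegree]
  refine natDegree_eq_of_le_of_coeff_ne_zero ?_ hcoeff_ne
  rw [hXW]
  exact (natDegree_sub_le _ _).trans (max_le
    (natDegree_mul_le.trans (Nat.add_le_add_left (natDegree_euler P) _))
    (natDegree_mul_le.trans (Nat.add_le_add_right (natDegree_euler Q) _)))

/-- The polynomial whose zeros are the finite points of the fibre of `P / Q` over a point of the
projective line, where `none` stands for `∞`. -/
def fiberPoly (P Q : K[X]) (w : Option K) : K[X] :=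
  w.elim Q fun w => P - C w * Q

variable {P Q S : K[X]}

@[simp]
lemma fiberPoly_none : fiberPoly P Q none = Q := rfl

lemma eval_fiberPoly_some (w y : K) :
    (fiberPoly P Q (some w)).eval y = P.eval y - w * Q.eval y := by
  simp [fiberPoly]

lemma wronskian_fiberPoly_some (w : K) :
    wronskian Q (fiberPoly P Q (some w)) = wronskian Q P := by
  simp only [fiberPoly, Option.elim_some, wronskian, derivative_sub, derivative_C_mul]
  ring

lemma degree_fiberPoly_some (hdeg : Q.degree < P.degree) (w : K) :
    (fiberPoly P Q (some w)).degree = P.degree := by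
  refine degree_sub_eq_left_of_degree_lt (lt_of_le_of_lt ?_ hdeg)
  rw [← smul_eq_C_mul]
  exact degree_smul_le w Q

lemma isCoprime_fiberPoly (hPQ : IsCoprime P Q) {u w : Option K} (huw : u ≠ w) :
    IsCoprime (fiberPoly P Q u) (fiberPoly P Q w) := by
  have hfin (w : K) : IsCoprime (fiberPoly P Q (some w)) Q := by
    have h := hPQ.add_mul_left_left (-C w)
    rwa [show P + Q * -C w = fiberPoly P Q (some w) by
      simp only [fiberPoly, Option.elim_some]; ring] at h
  rcases u with _ | u <;> rcases w with _ | w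
  · exact absurd rfl huw
  · exact (hfin w).symm
  · exact hfin u
  · have hunit : IsUnit (C (u - w)) :=
      isUnit_C.2 (sub_ne_zero.2 fun h => huw (congrArg some h)).isUnit
    have h := ((isCoprime_mul_unit_left_right hunit _ _).2 (hfin u)).add_mul_left_right 1
    rwa [show C (u - w) * Q + fiberPoly P Q (some u) * 1 = fiberPoly P Q (some w) by
      simp only [fiberPoly, Option.elim_some, C_sub]; ring] at h

lemma fiberPoly_ne_zero (hW : wronskian Q P ≠ 0) (w : Option K) : fiberPoly P Q w ≠ 0 := by
  intro h
  cases w with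
  | none => exact hW (by rw [← fiberPoly_none (P := P) (Q := Q), h, wronskian_zero_left])
  | some w => exact hW (by rw [← wronskian_fiberPoly_some w, h, wronskian_zero_right])

lemma pow_dvd_fiberPoly_of_pow_dvd_wronskian [CharZero K] (hPQ : IsCoprime P Q) {w : Option K}
    {c : K} (hc : (fiberPoly P Q w).eval c = 0) {k : ℕ} (hk : (X - C c) ^ k ∣ wronskian Q P) :
    (X - C c) ^ k ∣ fiberPoly P Q w := by
  refine (pow_dvd_pow _ k.le_succ).trans ?_
  cases w with
  | none =>
    have hPc : P.eval c ≠ 0 := by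
      simpa [show Q.eval c = 0 from hc] using aeval_ne_zero_of_isCoprime hPQ c
    refine pow_succ_dvd_of_pow_dvd_wronskian hPc hc ?_
    rwa [← wronskian_neg_eq, dvd_neg]
  | some w =>
    have hQc : Q.eval c ≠ 0 := by
      simpa [hc] using aeval_ne_zero_of_isCoprime
        (isCoprime_fiberPoly hPQ (Option.some_ne_none w)) c
    exact pow_succ_dvd_of_pow_dvd_wronskian hQc hc (by rwa [wronskian_fiberPoly_some])

lemma wronskian_dvd_prod_fiberPoly [CharZero K] [IsAlgClosed K] (hPQ : IsCoprime P Q)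
    (hW : wronskian Q P ≠ 0) {s : Finset (Option K)}
    (hs : ∀ c, (wronskian Q P).eval c = 0 → ∃ w ∈ s, (fiberPoly P Q w).eval c = 0) :
    wronskian Q P ∣ ∏ w ∈ s, fiberPoly P Q w := by
  classical
  have hprod : ∏ w ∈ s, fiberPoly P Q w ≠ 0 :=
    Finset.prod_ne_zero_iff.2 fun w _ => fiberPoly_ne_zero hW w
  refine (IsAlgClosed.splits _).dvd_of_roots_le_roots hW (Multiset.le_iff_count.2 fun c => ?_)
  rw [count_roots, count_roots, le_rootMultiplicity_iff hprod]
  by_cases hc : (wronskian Q P).eval c = 0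
  · obtain ⟨w, hw, hwc⟩ := hs c hc
    exact (pow_dvd_fiberPoly_of_pow_dvd_wronskian hPQ hwc (pow_rootMultiplicity_dvd _ c)).trans
      (Finset.dvd_prod_of_mem _ hw)
  · simp [rootMultiplicity_eq_zero hc]

lemma exists_principalParts (hPQ : IsCoprime P Q) {D : K[X]} (hD : D ≠ 0) {s : Finset K}
    (hS : D ∣ S * ∏ w ∈ Finset.insertNone s, fiberPoly P Q w) :
    ∃ M : K → K[X],
      (∀ w ∈ s, (M w).degree < D.degree ∧ D ∣ fiberPoly P Q (some w) * M w) ∧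
        D ∣ Q * (S - ∑ w ∈ s, M w) := by
  obtain ⟨μ, hμS, hμ⟩ := exists_eq_sum_of_dvd_mul_prod Finset.insertNone_nonempty
    (fun u _ w _ huw => isCoprime_fiberPoly hPQ huw) hS
  have hmod (w : K) : D ∣ μ (some w) - μ (some w) % D :=
    ⟨_, by rw [EuclideanDomain.mod_eq_sub_mul_div, sub_sub_cancel]⟩
  refine ⟨fun w => μ (some w) % D, fun w hw => ⟨degree_mod_lt _ hD, ?_⟩, ?_⟩
  · refine (dvd_iff_dvd_of_dvd_sub ?_).1 (hμ _ (Finset.some_mem_insertNone.2 hw))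
    rw [← mul_sub]
    exact (hmod w).mul_left _
  · rw [hμS, Finset.sum_insertNone, add_sub_assoc, ← Finset.sum_sub_distrib, mul_add]
    exact dvd_add (hμ none Finset.none_mem_insertNone)
      ((Finset.dvd_sum fun w _ => hmod w).mul_left _)

lemma exists_degree_lt_mul_eq_add_sum (hdeg : Q.degree < P.degree) {D : K[X]} {s : Finset K}
    {M : K → K[X]} (hM : ∀ w ∈ s, (M w).degree < D.degree ∧ D ∣ fiberPoly P Q (some w) * M w)
    (hMS : D ∣ Q * (S - ∑ w ∈ s, M w)) (hSdeg : (S * Q).degree < (D * P).degree) {x : K}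
    (hx : x ∉ s) :
    ∃ G : K[X], G.degree < P.degree ∧
      D * G = S * Q + fiberPoly P Q (some x) * ∑ w ∈ s, C (x - w)⁻¹ * M w := by
  set T := fiberPoly P Q (some x)
  have hDP : D * P ≠ 0 := fun h => by simp [h] at hSdeg
  have hsplit : S * Q + T * ∑ w ∈ s, C (x - w)⁻¹ * M w =
      Q * (S - ∑ w ∈ s, M w) + ∑ w ∈ s, C (x - w)⁻¹ * (fiberPoly P Q (some w) * M w) := by
    suffices T * ∑ w ∈ s, C (x - w)⁻¹ * M w =
        ∑ w ∈ s, C (x - w)⁻¹ * (fiberPoly P Q (some w) * M w) - Q * ∑ w ∈ s, M w by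
      rw [this]; ring
    rw [Finset.mul_sum, Finset.mul_sum, ← Finset.sum_sub_distrib]
    refine Finset.sum_congr rfl fun w hw => ?_
    have hxw : C (x - w)⁻¹ * (C x - C w) = 1 := by
      rw [← C_sub, ← C_mul, inv_mul_cancel₀ (sub_ne_zero.2 (ne_of_mem_of_not_mem hw hx).symm), C_1]
    simp only [T, fiberPoly, Option.elim_some]
    linear_combination -Q * M w * hxw
  obtain ⟨G, hG⟩ : D ∣ S * Q + T * ∑ w ∈ s, C (x - w)⁻¹ * M w := by
    rw [hsplit]
    exact dvd_add hMS (Finset.dvd_sum fun w hw => (hM w hw).2.mul_left _)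
  have hsum : (∑ w ∈ s, C (x - w)⁻¹ * M w).degree < D.degree := by
    refine (degree_sum_le _ _).trans_lt ((Finset.sup_lt_iff ?_).2 fun w hw => ?_)
    · exact bot_lt_iff_ne_bot.2 (degree_eq_bot.not.2 (left_ne_zero_of_mul hDP))
    · rw [← smul_eq_C_mul]
      exact (degree_smul_le _ _).trans_lt (hM w hw).1
  have hDG : (D * G).degree < D.degree + P.degree := by
    rw [← hG, ← degree_mul]
    refine (degree_add_le _ _).trans_lt (max_lt hSdeg ?_)
    rw [mul_comm, degree_mul, degree_mul, degree_fiberPoly_some hdeg]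
    exact WithBot.add_lt_add_right (degree_eq_bot.not.2 (right_ne_zero_of_mul hDP)) hsum
  rw [degree_mul] at hDG
  exact ⟨G, lt_of_add_lt_add_left hDG, hG.symm⟩

lemma eval_wronskian_of_eval_fiberPoly_eq_zero {x y : K}
    (hy : (fiberPoly P Q (some x)).eval y = 0) :
    (wronskian Q P).eval y = Q.eval y * (derivative (fiberPoly P Q (some x))).eval y := by
  rw [← wronskian_fiberPoly_some x, wronskian, eval_sub, eval_mul, eval_mul, hy, mul_zero, sub_zero]

lemma separable_fiberPoly_some [IsAlgClosed K] {x : K}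
    (hx : ∀ y, (fiberPoly P Q (some x)).eval y = 0 → (wronskian Q P).eval y ≠ 0) :
    (fiberPoly P Q (some x)).Separable := by
  refine (isCoprime_iff_aeval_ne_zero_of_isAlgClosed K K _ _).2 fun y =>
    or_iff_not_imp_left.2 fun hy => ?_
  rw [coe_aeval_eq_eval, not_not] at hy
  have := hx y hy
  rw [eval_wronskian_of_eval_fiberPoly_eq_zero hy] at this
  exact right_ne_zero_of_mul this

lemma eval_wronskian_ne_zero_of_eval_fiberPoly_eq_zero (hPQ : IsCoprime P Q)
    {s : Finset (Option K)}
    (hs : ∀ c, (wronskian Q P).eval c = 0 → ∃ w ∈ s, (fiberPoly P Q w).eval c = 0)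
    {u : Option K} (hu : u ∉ s) {y : K} (hy : (fiberPoly P Q u).eval y = 0) :
    (wronskian Q P).eval y ≠ 0 := by
  intro hWy
  obtain ⟨w, hw, hwy⟩ := hs y hWy
  simpa [hy, hwy] using aeval_ne_zero_of_isCoprime
    (isCoprime_fiberPoly hPQ (ne_of_mem_of_not_mem hw hu)) y

theorem exists_sum_roots_fiberPoly_eq [IsAlgClosed K] [DecidableEq K] (hPQ : IsCoprime P Q)
    (hdeg : Q.degree < P.degree) {s : Finset K}
    (hS : wronskian Q P ∣ S * ∏ w ∈ Finset.insertNone s, fiberPoly P Q w)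
    (hSdeg : (S * Q).degree < (wronskian Q P * P).degree) :
    ∃ M : K → K[X], ∀ x ∉ s,
      (∀ y, (fiberPoly P Q (some x)).eval y = 0 → (wronskian Q P).eval y ≠ 0) →
      ∀ z, (wronskian Q P).eval z ≠ 0 → (fiberPoly P Q (some x)).eval z ≠ 0 →
        ∑ y ∈ (fiberPoly P Q (some x)).roots.toFinset,
            S.eval y * Q.eval y ^ 2 / ((wronskian Q P).eval y ^ 2 * (z - y)) =
          (S.eval z * Q.eval z / (fiberPoly P Q (some x)).eval z +
            ∑ w ∈ s, (M w).eval z / (x - w)) / (wronskian Q P).eval z := by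
  have hW : wronskian Q P ≠ 0 := fun h => by simp [h] at hSdeg
  obtain ⟨M, hM, hMS⟩ := exists_principalParts hPQ hW hS
  refine ⟨M, fun x hx hTW z hWz hTz => ?_⟩
  obtain ⟨G, hGdeg, hG⟩ := exists_degree_lt_mul_eq_add_sum hdeg hM hMS hSdeg hx
  set T := fiberPoly P Q (some x)
  have hGeval (y : K) : (wronskian Q P).eval y * G.eval y =
      S.eval y * Q.eval y + T.eval y * ∑ w ∈ s, (M w).eval y / (x - w) := by
    simpa [eval_finsetSum, div_eq_inv_mul] using congrArg (eval y) hG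
  have hterm : ∀ y ∈ T.roots.toFinset,
      S.eval y * Q.eval y ^ 2 / ((wronskian Q P).eval y ^ 2 * (z - y)) =
        G.eval y / ((z - y) * (derivative T).eval y) := by
    intro y hy
    have hTy : T.eval y = 0 := isRoot_of_mem_roots (Multiset.mem_toFinset.1 hy)
    have hWy := hTW y hTy
    have hWT := eval_wronskian_of_eval_fiberPoly_eq_zero hTy
    have hT'y : (derivative T).eval y ≠ 0 := right_ne_zero_of_mul (hWT ▸ hWy)
    have hzy : z - y ≠ 0 := sub_ne_zero.2 fun h => hTz (h ▸ hTy)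
    have hGy := hGeval y
    rw [hTy, zero_mul, add_zero] at hGy
    rw [div_eq_div_iff (mul_ne_zero (pow_ne_zero 2 hWy) hzy) (mul_ne_zero hzy hT'y)]
    linear_combination (-Q.eval y * (z - y) * (derivative T).eval y) * hGy -
      (z - y) * (wronskian Q P).eval y * G.eval y * hWT
  rw [Finset.sum_congr rfl hterm, sum_roots_eval_div_derivative (IsAlgClosed.splits T)
    (separable_fiberPoly_some hTW) (hGdeg.trans_eq (degree_fiberPoly_some hdeg x).symm) hTz,
    eq_div_iff hWz, div_mul_eq_mul_div, mul_comm, hGeval, add_div, mul_div_cancel_left₀ _ hTz]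

lemma exists_X_mul_X_sub_one_mul_eq (h0 : P.eval 0 = 0) (h1 : P.eval 1 = Q.eval 1) :
    ∃ S : K[X], X * (X - 1) * S = P * (P - Q) := by
  have hX : X ∣ P := X_dvd_iff.2 (by rw [coeff_zero_eq_eval_zero, h0])
  have hX1 : X - 1 ∣ P - Q := by
    rw [← C_1, dvd_iff_isRoot, IsRoot, eval_sub, h1, sub_self]
  obtain ⟨S, hS⟩ := mul_dvd_mul hX hX1
  exact ⟨S, hS.symm⟩

lemma wronskian_dvd_mul_prod_fiberPoly [CharZero K] [IsAlgClosed K] [DecidableEq K]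
    (hPQ : IsCoprime P Q) (hS : X * (X - 1) * S = P * (P - Q))
    (hW0 : (wronskian Q P).eval 0 ≠ 0) (hW1 : (wronskian Q P).eval 1 ≠ 0) {s : Finset K}
    (hs : ∀ c, (wronskian Q P).eval c = 0 →
      ∃ w ∈ Finset.insertNone s, (fiberPoly P Q w).eval c = 0) :
    wronskian Q P ∣ S * ∏ w ∈ Finset.insertNone (s \ {0, 1}), fiberPoly P Q w := by
  have hW : wronskian Q P ≠ 0 := fun h => hW0 (by rw [h, eval_zero])
  have hcop (a : K) (ha : (wronskian Q P).eval a ≠ 0) : IsCoprime (wronskian Q P) (X - C a) :=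
    ((irreducible_X_sub_C a).coprime_iff_not_dvd.2 (ha ∘ dvd_iff_isRoot.1)).symm
  have hcop01 : IsCoprime (wronskian Q P) (X * (X - 1)) := by
    simpa using (hcop 0 hW0).mul_right (hcop 1 hW1)
  refine hcop01.dvd_of_dvd_mul_left ((wronskian_dvd_prod_fiberPoly hPQ hW hs).trans ?_)
  have hsub : Finset.insertNone s ⊆ Finset.insertNone (s \ {0, 1} ∪ {0, 1}) :=
    Finset.insertNone.monotone <| by
      rw [Finset.sdiff_union_self_eq_union]
      exact Finset.subset_union_left
  refine (Finset.prod_dvd_prod_of_subset _ _ _ hsub).trans (dvd_of_eq ?_)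
  simp only [Finset.prod_insertNone, Finset.prod_union Finset.sdiff_disjoint,
    Finset.prod_pair (zero_ne_one' K)]
  generalize ∏ w ∈ s \ {0, 1}, fiberPoly P Q (some w) = H
  simp only [fiberPoly, Option.elim_some, Option.elim_none, C_0, C_1]
  linear_combination (-Q * H) * hS

lemma degree_mul_lt_degree_wronskian_mul [CharZero K] (hdeg : Q.natDegree < P.natDegree)
    (hW : wronskian Q P ≠ 0) (hS : X * (X - 1) * S = P * (P - Q)) :
    (S * Q).degree < (wronskian Q P * P).degree := by
  have hQ : Q ≠ 0 := by
    rintro rfl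
    exact hW (wronskian_zero_left P)
  have hP : P ≠ 0 := ne_zero_of_natDegree_gt hdeg
  have hPQ : (P - Q).natDegree = P.natDegree := natDegree_sub_eq_left_of_natDegree_lt hdeg
  have hPQ0 : P - Q ≠ 0 := ne_zero_of_natDegree_gt (hPQ.symm ▸ hdeg)
  have hS0 : S ≠ 0 := by
    rintro rfl
    exact mul_ne_zero hP hPQ0 (by rw [← hS, mul_zero])
  have hX1 : (X - 1 : K[X]) ≠ 0 := X_sub_C_ne_zero 1
  have hSdeg : 2 + S.natDegree = 2 * P.natDegree := by
    have h := congrArg natDegree hS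
    rw [natDegree_mul (mul_ne_zero X_ne_zero hX1) hS0, natDegree_mul X_ne_zero hX1, natDegree_X,
      ← C_1, natDegree_X_sub_C, natDegree_mul hP hPQ0, hPQ] at h
    omega
  have hWdeg := natDegree_wronskian_add_one hP hQ hdeg.ne'
  refine degree_lt_degree ?_
  rw [natDegree_mul hS0 hQ, natDegree_mul hW hP]
  omega

/-- The kernel `ψ_w(u)`. For `w ∉ {0, 1}`, `ψ_w(u) du²` is the quadratic differential on the
projective line with simple poles at `0`, `1`, `w` and `∞`, scaled to have residue `1` at `w`. -/
def poleKernel (w u : K) : K :=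
  w * (w - 1) / (u * (u - 1) * (u - w))

lemma poleKernel_zero (u : K) : poleKernel 0 u = 0 := by simp [poleKernel]

lemma poleKernel_one (u : K) : poleKernel 1 u = 0 := by simp [poleKernel]

lemma poleKernel_div_sq (hS : X * (X - 1) * S = P * (P - Q)) {x y : K} (hx0 : x ≠ 0)
    (hx1 : x ≠ 1) (hQy : Q.eval y ≠ 0) (hxy : (fiberPoly P Q (some x)).eval y = 0) (z : K) :
    poleKernel z y / ((wronskian Q P).eval y / Q.eval y ^ 2) ^ 2 =
      -(z * (z - 1) / (x * (x - 1))) *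
        (S.eval y * Q.eval y ^ 2 / ((wronskian Q P).eval y ^ 2 * (z - y))) := by
  have hPy : P.eval y = x * Q.eval y := by rwa [eval_fiberPoly_some, sub_eq_zero] at hxy
  have hx1' : x - 1 ≠ 0 := sub_ne_zero.2 hx1
  have hSy : y * (y - 1) * S.eval y = x * (x - 1) * Q.eval y ^ 2 := by
    have := congrArg (eval y) hS
    simp only [eval_mul, eval_sub, eval_X, eval_one, hPy] at this
    rw [this]
    ring
  have hy : y * (y - 1) ≠ 0 := fun h => by
    rw [h, zero_mul] at hSy
    exact mul_ne_zero (mul_ne_zero hx0 hx1') (pow_ne_zero 2 hQy) hSy.symm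
  rw [poleKernel, ← neg_sub z y, eq_div_of_mul_eq hy ((mul_comm _ _).trans hSy)]
  field_simp

lemma one_div_mul_poleKernel_div (hS : X * (X - 1) * S = P * (P - Q)) {x z : K}
    (hQz : Q.eval z ≠ 0) :
    1 / ((wronskian Q P).eval z / Q.eval z ^ 2) * poleKernel (P.eval z / Q.eval z) x =
      -(z * (z - 1) / (x * (x - 1))) *
        (S.eval z * Q.eval z / (fiberPoly P Q (some x)).eval z / (wronskian Q P).eval z) := by
  have hSz : z * (z - 1) * S.eval z = P.eval z * (P.eval z - Q.eval z) := by
    simpa using congrArg (eval z) hS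
  have hxz' : x - P.eval z / Q.eval z = -(P.eval z - x * Q.eval z) / Q.eval z := by
    field_simp
    ring
  rw [eq_comm, eval_fiberPoly_some, div_div, ← neg_div, div_mul_div_comm,
    show -(z * (z - 1)) * (S.eval z * Q.eval z) = -(z * (z - 1) * S.eval z) * Q.eval z by ring,
    hSz, poleKernel, hxz']
  field_simp

lemma sum_sdiff_mul_poleKernel [DecidableEq K] (s : Finset K) (g : K → K) (x : K) :
    ∑ w ∈ s \ {0, 1}, g w * poleKernel w x = ∑ w ∈ s, g w * poleKernel w x := by
  refine Finset.sum_subset Finset.sdiff_subset fun w hw hw' => ?_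
  obtain rfl | rfl : w = 0 ∨ w = 1 := by simpa [hw, or_iff_not_imp_left] using hw'
  · rw [poleKernel_zero, mul_zero]
  · rw [poleKernel_one, mul_zero]

theorem exists_sum_roots_poleKernel_eq [CharZero K] [IsAlgClosed K] [DecidableEq K]
    (hPQ : IsCoprime P Q) (hdeg : Q.natDegree < P.natDegree)
    (h0 : P.eval 0 = 0) (h1 : P.eval 1 = Q.eval 1)
    (hW0 : (wronskian Q P).eval 0 ≠ 0) (hW1 : (wronskian Q P).eval 1 ≠ 0) {s : Finset K}
    (hs : ∀ c, (wronskian Q P).eval c = 0 →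
      ∃ w ∈ Finset.insertNone s, (fiberPoly P Q w).eval c = 0) :
    ∃ N : K → K[X], ∀ z, Q.eval z ≠ 0 → (wronskian Q P).eval z ≠ 0 →
      ∀ x, x ≠ 0 → x ≠ 1 → x ∉ s → x ≠ P.eval z / Q.eval z →
        ∑ y ∈ (fiberPoly P Q (some x)).roots.toFinset,
            poleKernel z y / ((wronskian Q P).eval y / Q.eval y ^ 2) ^ 2 =
          1 / ((wronskian Q P).eval z / Q.eval z ^ 2) * poleKernel (P.eval z / Q.eval z) x +
            ∑ w ∈ s, (N w).eval z / (wronskian Q P).eval z * poleKernel w x := by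
  have hW : wronskian Q P ≠ 0 := fun h => hW0 (by rw [h, eval_zero])
  obtain ⟨S, hS⟩ := exists_X_mul_X_sub_one_mul_eq h0 h1
  obtain ⟨M, hM⟩ := exists_sum_roots_fiberPoly_eq hPQ (degree_lt_degree hdeg)
    (wronskian_dvd_mul_prod_fiberPoly hPQ hS hW0 hW1 hs)
    (degree_mul_lt_degree_wronskian_mul hdeg hW hS)
  refine ⟨fun w => C (w * (w - 1))⁻¹ * (X * (1 - X)) * M w, fun z hQz hWz x hx0 hx1 hxs hxz => ?_⟩
  have hTW (y : K) (hy : (fiberPoly P Q (some x)).eval y = 0) : (wronskian Q P).eval y ≠ 0 :=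
    eval_wronskian_ne_zero_of_eval_fiberPoly_eq_zero hPQ hs (by simpa using hxs) hy
  have hTz : P.eval z - x * Q.eval z ≠ 0 := fun h =>
    hxz ((eq_div_iff hQz).2 (sub_eq_zero.1 h).symm)
  rw [Finset.sum_congr rfl fun y hy => ?_, ← Finset.mul_sum, hM x (by simp [hxs]) hTW z hWz
    (by rwa [eval_fiberPoly_some]), add_div, mul_add]
  · congr 1
    · exact (one_div_mul_poleKernel_div hS hQz).symm
    · rw [← sum_sdiff_mul_poleKernel, Finset.sum_div, Finset.mul_sum]
      refine Finset.sum_congr rfl fun w hw => ?_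
      obtain ⟨-, hw0, hw1⟩ : w ∈ s ∧ w ≠ 0 ∧ w ≠ 1 := by simpa using hw
      have hw1' : w - 1 ≠ 0 := sub_ne_zero.2 hw1
      simp only [poleKernel, eval_mul, eval_sub, eval_C, eval_X, eval_one]
      field_simp
      ring
  · have hTy : (fiberPoly P Q (some x)).eval y = 0 :=
      isRoot_of_mem_roots (Multiset.mem_toFinset.1 hy)
    have hQy : Q.eval y ≠ 0 :=
      left_ne_zero_of_mul (eval_wronskian_of_eval_fiberPoly_eq_zero hTy ▸ hTW y hTy)
    exact poleKernel_div_sq hS hx0 hx1 hQy hTy z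

end Field

lemma deriv_eval_div_eval {K : Type*} [NontriviallyNormedField K] {P Q : K[X]} {z : K}
    (hz : Q.eval z ≠ 0) :
    deriv (fun z => P.eval z / Q.eval z) z = (wronskian Q P).eval z / Q.eval z ^ 2 := by
  rw [((P.hasDerivAt z).fun_div (Q.hasDerivAt z) hz).deriv, wronskian, eval_sub, eval_mul, eval_mul]
  ring

theorem stmt1_general {K ι : Type*} [Field K] [CharZero K] [IsAlgClosed K] [Fintype ι]
    {P Q : K[X]} (hPQ : IsCoprime P Q) (hdeg : Q.natDegree < P.natDegree)
    {f f' : K → K} (hf : f = fun z => P.eval z / Q.eval z)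
    (hf' : ∀ z, Q.eval z ≠ 0 → f' z = (wronskian Q P).eval z / Q.eval z ^ 2)
    (h0 : P.eval 0 = 0) (h1 : P.eval 1 = Q.eval 1) (hd0 : f' 0 ≠ 0) (hd1 : f' 1 ≠ 0)
    {v : ι → K} (hv_inj : Function.Injective v)
    (hv : ∀ c, Q.eval c ≠ 0 → f' c = 0 → f c ∈ Set.range v) :
    ∃ L : ι → K → K,
      (∀ j, ∃ A B : K[X], B ≠ 0 ∧ ∀ z, B.eval z ≠ 0 → L j z = A.eval z / B.eval z) ∧
      ∀ z, Q.eval z ≠ 0 → f' z ≠ 0 → ∀ x, x ≠ 0 → x ≠ 1 → x ≠ f z → (∀ j, x ≠ v j) →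
        ∑ᶠ y ∈ {y | P.eval y = x * Q.eval y}, poleKernel z y / f' y ^ 2 =
          1 / f' z * poleKernel (f z) x + ∑ j, L j z * poleKernel (v j) x := by
  classical
  subst hf
  have hQ (x a : K) (ha : P.eval a = x * Q.eval a) : Q.eval a ≠ 0 := by
    intro h
    simpa [ha, h] using aeval_ne_zero_of_isCoprime hPQ a
  have hW (a : K) (ha : Q.eval a ≠ 0) (hda : f' a ≠ 0) : (wronskian Q P).eval a ≠ 0 := by
    intro h
    exact hda (by rw [hf' a ha, h, zero_div])
  have hW0 := hW 0 (hQ 0 0 (by rw [h0, zero_mul])) hd0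
  have hW1 := hW 1 (hQ 1 1 (by rw [h1, one_mul])) hd1
  have hWne : wronskian Q P ≠ 0 := fun h => hW0 (by rw [h, eval_zero])
  have hcrit (c : K) (hc : (wronskian Q P).eval c = 0) :
      ∃ w ∈ Finset.insertNone (Finset.univ.image v), (fiberPoly P Q w).eval c = 0 := by
    by_cases hQc : Q.eval c = 0
    · exact ⟨none, Finset.none_mem_insertNone, hQc⟩
    obtain ⟨j, hj⟩ := hv c hQc (by rw [hf' c hQc, hc, zero_div])
    refine ⟨some (v j), by simp, ?_⟩
    rw [eval_fiberPoly_some, hj, div_mul_cancel₀ _ hQc, sub_self]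
  obtain ⟨N, hN⟩ := exists_sum_roots_poleKernel_eq hPQ hdeg h0 h1 hW0 hW1 hcrit
  refine ⟨fun j z => (N (v j)).eval z / (wronskian Q P).eval z,
    fun j => ⟨N (v j), wronskian Q P, hWne, fun _ _ => rfl⟩, fun z hQz hz x hx0 hx1 hxz hxv => ?_⟩
  have hfib : {y | P.eval y = x * Q.eval y} = (fiberPoly P Q (some x)).roots.toFinset := by
    ext y
    simp [fiberPoly_ne_zero hWne, eval_fiberPoly_some, sub_eq_zero]
  have hNz := hN z hQz (hW z hQz hz) x hx0 hx1 (by simpa [eq_comm] using hxv) hxz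
  rw [← hf' z hQz, Finset.sum_image hv_inj.injOn, ← finsum_mem_coe_finset, ← hfib] at hNz
  rw [← hNz]
  exact finsum_mem_congr rfl fun y hy => by rw [hf' y (hQ x y hy)]

/-- For a rational map `f = P/Q` of degree `d ≥ 2` normalized so that
`0, 1, ∞` are non-critical fixed points, with kernels `ψ_w(u) = w(w−1)/(u(u−1)(u−w))`,
there exist rational functions `L j` such that
`Σ_{y : f(y)=x} ψ_z(y)/(f'(y))² = (1/f'(z))·ψ_{f(z)}(x) + Σ_j L j z·ψ_{v j}(x)`. -/
theorem stmt1 (P Q : Polynomial ℂ) (hcop : IsCoprime P Q)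
    (hdeg : P.natDegree = Q.natDegree + 1) (hdeg2 : 2 ≤ P.natDegree)
    (f : ℂ → ℂ) (hf : f = fun z => P.eval z / Q.eval z)
    (h0 : P.eval 0 = 0) (hQ0 : Q.eval 0 ≠ 0)
    (h1 : P.eval 1 = Q.eval 1) (hQ1 : Q.eval 1 ≠ 0)
    (hd0 : deriv f 0 ≠ 0) (hd1 : deriv f 1 ≠ 0)
    (p : ℕ) (v : Fin p → ℂ) (hv_inj : Function.Injective v)
    (hv_range : Set.range v =
      {w : ℂ | ∃ c : ℂ, Q.eval c ≠ 0 ∧ deriv f c = 0 ∧ f c = w})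
    (ψ : ℂ → ℂ → ℂ)
    (hψ : ψ = fun w u => (w * (w - 1)) / (u * (u - 1) * (u - w))) :
    ∃ L : Fin p → ℂ → ℂ,
      (∀ j : Fin p, ∃ A B : Polynomial ℂ, B ≠ 0 ∧
        ∀ z : ℂ, B.eval z ≠ 0 → L j z = A.eval z / B.eval z) ∧
      ∀ z : ℂ, Q.eval z ≠ 0 → deriv f z ≠ 0 →
        ∀ x : ℂ, x ≠ 0 → x ≠ 1 → x ≠ f z → (∀ j : Fin p, x ≠ v j) →
          ∑ᶠ y ∈ {y : ℂ | P.eval y = x * Q.eval y}, ψ z y / (deriv f y) ^ 2 =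
            (1 / deriv f z) * ψ (f z) x + ∑ j : Fin p, L j z * ψ (v j) x := by
  subst hf hψ
  exact stmt1_general hcop (by omega) rfl (fun z => deriv_eval_div_eval) h0 h1 hd0 hd1 hv_inj
    fun c hc hc' => hv_range ▸ ⟨c, hc, hc', rfl⟩

end
end

section
/- Let U ⊆ ℂ be a nonempty open connected set, Φ : U → ℂ holomorphic on U, and Y ⊆ U a Lebesgue-measurable set of positive area such that Φ(z) is a positive real number for every z ∈ Y. Then Φ is constant on U; in particular there is κ > 0 with Φ(z) = κ for all z ∈ U. -/
open MeasureTheory Filter Topology Set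

noncomputable section

/-!
On a connected open set, the derivative of a nonconstant analytic function has discrete, hence null,
zero set. At any other point the function is, up to a small Lipschitz error, an invertible linear
map, so near that point it cannot compress a set of positive measure into a null set. Hence a
nonconstant analytic function pulls null sets back to null sets, and the positive real axis is null
in the plane.
-/

section RegularPoints

open scoped NNReal ENNReal

variable {E : Type*} [NormedAddCommGroup E] [NormedSpace ℝ E] [FiniteDimensional ℝ E]
  [MeasurableSpace E] [BorelSpace E] (μ : Measure E) [μ.IsAddHaarMeasure] {f : E → E}

theorem exists_mem_nhds_forall_mul_le_addHaar_image {f' : E →L[ℝ] E} {a : E}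
    (hf : HasStrictFDerivAt f f' a) {m : ℝ≥0} (hm : (m : ℝ≥0∞) < ENNReal.ofReal |f'.det|) :
    ∃ V ∈ 𝓝 a, ∀ s ⊆ V, m * μ s ≤ μ (f '' s) := by
  obtain ⟨δ, hδ, hδ_pos⟩ :=
    ((mul_le_addHaar_image_of_lt_det μ f' hm).and self_mem_nhdsWithin).exists
  obtain ⟨V, hV, hfV⟩ := hf.approximates_deriv_on_nhds (c := δ) (.inr hδ_pos)
  exact ⟨V, hV, fun s hs ↦ hδ s f (hfV.mono_set hs)⟩

theorem addHaar_inter_preimage_eq_zero_of_det_ne_zero {f' : E → E →L[ℝ] E} {s N : Set E}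
    (hf : ∀ x ∈ s, HasStrictFDerivAt f (f' x) x) (hdet : ∀ x ∈ s, (f' x).det ≠ 0)
    (hN : μ N = 0) : μ (s ∩ f ⁻¹' N) = 0 := by
  refine measure_null_of_locally_null _ fun x hx ↦ ?_
  obtain ⟨m, hm_pos, hm⟩ := ENNReal.lt_iff_exists_nnreal_btwn.1
    (ENNReal.ofReal_pos.2 (abs_pos.2 (hdet x hx.1)))
  obtain ⟨V, hV, hexpand⟩ := exists_mem_nhds_forall_mul_le_addHaar_image μ (hf x hx.1) hm
  refine ⟨(s ∩ f ⁻¹' N) ∩ V, inter_mem_nhdsWithin _ hV, ?_⟩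
  have himage : μ (f '' ((s ∩ f ⁻¹' N) ∩ V)) = 0 :=
    measure_mono_null (image_subset_iff.2 fun _ hy ↦ hy.1.2) hN
  have hmul : m * μ ((s ∩ f ⁻¹' N) ∩ V) = 0 :=
    le_zero_iff.1 ((hexpand _ inter_subset_right).trans_eq himage)
  exact (mul_eq_zero.1 hmul).resolve_left hm_pos.ne'

end RegularPoints

theorem eqOn_zero_or_measure_inter_preimage_zero_eq_zero {𝕜 E : Type*} [NontriviallyNormedField 𝕜]
    [SecondCountableTopology 𝕜] [MeasurableSpace 𝕜] (μ : Measure 𝕜) [NullSingletonClass μ]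
    [NormedAddCommGroup E] [NormedSpace 𝕜 E] {f : 𝕜 → E} {U : Set 𝕜}
    (hf : AnalyticOnNhd 𝕜 f U) (hU : IsPreconnected U) :
    EqOn f 0 U ∨ μ (U ∩ f ⁻¹' {0}) = 0 := by
  refine (hf.eqOn_zero_or_eventually_ne_zero_of_preconnected hU).imp_right fun hne ↦ ?_
  have hdiscrete : IsDiscrete (f ⁻¹' {0} ∩ U) := isDiscrete_of_codiscreteWithin hne
  rw [inter_comm]
  exact ((HereditarilyLindelofSpace.isLindelof _).countable_of_isDiscrete hdiscrete).measure_zero μ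

section Analytic

variable {𝕜 : Type*} [RCLike 𝕜]

theorem det_restrictScalars_toSpanSingleton_ne_zero {c : 𝕜} (hc : c ≠ 0) :
    ((ContinuousLinearMap.toSpanSingleton 𝕜 c).restrictScalars ℝ).det ≠ 0 := by
  simp [ContinuousLinearMap.det, LinearMap.det_restrictScalars, hc, Algebra.norm_eq_zero_iff]

variable [MeasurableSpace 𝕜] [BorelSpace 𝕜] (μ : Measure 𝕜) [μ.IsAddHaarMeasure]
  {f : 𝕜 → 𝕜} {U N : Set 𝕜}

theorem addHaar_inter_preimage_eq_zero_of_deriv_ne_zero {f' : 𝕜 → 𝕜} {s : Set 𝕜}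
    (hf : ∀ z ∈ s, HasStrictDerivAt f (f' z) z) (hf' : ∀ z ∈ s, f' z ≠ 0) (hN : μ N = 0) :
    μ (s ∩ f ⁻¹' N) = 0 :=
  addHaar_inter_preimage_eq_zero_of_det_ne_zero μ
    (fun z hz ↦ (hf z hz).hasStrictFDerivAt.restrictScalars ℝ)
    (fun z hz ↦ det_restrictScalars_toSpanSingleton_ne_zero (hf' z hz)) hN

theorem exists_eq_const_or_addHaar_inter_preimage_eq_zero (hf : AnalyticOnNhd 𝕜 f U)
    (hU : IsOpen U) (hUc : IsPreconnected U) (hN : μ N = 0) :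
    (∃ c, ∀ z ∈ U, f z = c) ∨ μ (U ∩ f ⁻¹' N) = 0 := by
  refine (eqOn_zero_or_measure_inter_preimage_zero_eq_zero μ hf.deriv hUc).imp
    (hU.exists_is_const_of_deriv_eq_zero hUc hf.differentiableOn) fun hcrit ↦ ?_
  have hreg : μ ((U \ deriv f ⁻¹' {0}) ∩ f ⁻¹' N) = 0 :=
    addHaar_inter_preimage_eq_zero_of_deriv_ne_zero μ
      (fun z hz ↦ (hf z hz.1).hasStrictDerivAt) (fun _ hz ↦ hz.2) hN
  refine measure_mono_null (fun z hz ↦ ?_) (measure_union_null hcrit hreg)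
  by_cases hz_crit : deriv f z = 0
  exacts [.inl ⟨hz.1, hz_crit⟩, .inr ⟨⟨hz.1, hz_crit⟩, hz.2⟩]

theorem stmt15_general (hU : IsOpen U) (hUc : IsPreconnected U) (hf : AnalyticOnNhd 𝕜 f U)
    {Y : Set 𝕜} (hYU : Y ⊆ U) (hY : μ Y ≠ 0) (hN : μ N = 0) (hYN : MapsTo f Y N) :
    ∃ c ∈ N, ∀ z ∈ U, f z = c := by
  obtain ⟨c, hc⟩ := (exists_eq_const_or_addHaar_inter_preimage_eq_zero μ hf hU hUc hN).resolve_right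
    fun hnull ↦ hY (measure_mono_null (subset_inter hYU hYN) hnull)
  obtain ⟨y, hy⟩ := nonempty_of_measure_ne_zero hY
  exact ⟨c, hc y (hYU hy) ▸ hYN hy, hc⟩

end Analytic

theorem volume_setOf_im_eq_zero : volume {z : ℂ | z.im = 0} = 0 := by
  have hne : LinearMap.ker Complex.imLm ≠ ⊤ := fun h ↦ by
    have hI : Complex.I ∈ LinearMap.ker Complex.imLm := h ▸ Submodule.mem_top
    simp at hI
  exact Measure.addHaar_submodule volume _ hne

/-- a holomorphic function on a nonempty open connected set which takes
positive real values on a set of positive area is a positive real constant. -/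
theorem stmt15 (U : Set ℂ) (hUopen : IsOpen U) (hUconn : IsConnected U)
    (Φ : ℂ → ℂ) (hΦ : DifferentiableOn ℂ Φ U)
    (Y : Set ℂ) (hYmeas : MeasurableSet Y) (hYU : Y ⊆ U)
    (hYpos : 0 < volume Y)
    (hval : ∀ z ∈ Y, (Φ z).im = 0 ∧ 0 < (Φ z).re) :
    ∃ κ : ℝ, 0 < κ ∧ ∀ z ∈ U, Φ z = (κ : ℂ) := by
  have hray : volume {w : ℂ | w.im = 0 ∧ 0 < w.re} = 0 :=
    measure_mono_null (fun _ hw ↦ hw.1) volume_setOf_im_eq_zero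
  obtain ⟨c, ⟨him, hre⟩, hc⟩ := stmt15_general volume hUopen hUconn.isPreconnected
    (hΦ.analyticOnNhd hUopen) hYU hYpos.ne' hray hval
  exact ⟨c.re, hre, fun z hz ↦ (hc z hz).trans (Complex.ext rfl him)⟩

end
end
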